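/- Let q be a prime power, let S_T be a tangent splash of ℓ∞ in PG(2,q³) with centre T, and let b be an order-q-subline of PG(2,q³) disjoint from ℓ∞ whose spanning line of PG(2,q³) meets ℓ∞ in a point of S_T \ {T}. Then there is exactly one order-q-subplane of PG(2,q³) that is tangent to ℓ∞, contains b, and has tangent splash equal to S_T. -/

import Mathlib

namespace TangentSplashPaper

open Projectivization

/-- The point set of the projective plane `PG(2,K)`. -/
abbrev PGPoint (K : Type*) [Field K] := Projectivization K (Fin 3 → K)

/-- `ℓ` is a line of `PG(2,K)`: the set of points lying in a fixed
2-dimensional linear subspace. -/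
def IsLine {K : Type*} [Field K] (ℓ : Set (PGPoint K)) : Prop :=
  ∃ W : Submodule K (Fin 3 → K), Module.finrank K W = 2 ∧
    ℓ = {P : PGPoint K | P.submodule ≤ W}

/-- The distinguished line `ℓ∞` of `PG(2,K)`: points whose last homogeneous
coordinate vanishes. -/
def linf (K : Type*) [Field K] : Set (PGPoint K) := {P : PGPoint K | P.rep 2 = 0}

/-- The homography of `PG(2,K)` induced by a linear automorphism of `K³`;
as maps of point sets, these are exactly the elements of `PGL(3,K)`. -/
def hmap {K : Type*} [Field K] (f : (Fin 3 → K) ≃ₗ[K] (Fin 3 → K)) :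
    PGPoint K → PGPoint K :=
  Projectivization.map f.toLinearMap f.injective

/-- The base subplane `PG(2,F)`: points admitting homogeneous coordinates in
the subfield `F`. -/
def basePlane (F K : Type*) [Field F] [Field K] [Algebra F K] : Set (PGPoint K) :=
  {P : PGPoint K | ∃ v : Fin 3 → K, ∃ hv : v ≠ 0, P = Projectivization.mk K v hv ∧
    ∀ i, v i ∈ (algebraMap F K).range}

/-- An order-`q`-subplane of `PG(2,K)` (`q = |F|`): an image of `PG(2,F)`
under a homography. -/
def IsSubplane (F : Type*) {K : Type*} [Field F] [Field K] [Algebra F K]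
    (S : Set (PGPoint K)) : Prop :=
  ∃ f : (Fin 3 → K) ≃ₗ[K] (Fin 3 → K), S = hmap f '' basePlane F K

/-- An order-`q`-subline of `PG(2,K)`: the intersection of an order-`q`-subplane
with a line of `PG(2,K)` meeting it in `q+1` points. -/
def IsSubline (F : Type*) {K : Type*} [Field F] [Field K] [Algebra F K] (q : ℕ)
    (b : Set (PGPoint K)) : Prop :=
  ∃ S ℓ : Set (PGPoint K), IsSubplane F S ∧ IsLine ℓ ∧
    (S ∩ ℓ).ncard = q + 1 ∧ b = S ∩ ℓ

/-- The splash of a subplane `π` on `ℓ∞`: all points of `ℓ∞` lying on a line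
of `PG(2,K)` spanned by two points of `π`. -/
def splash {K : Type*} [Field K] (π : Set (PGPoint K)) : Set (PGPoint K) :=
  {X : PGPoint K | X ∈ linf K ∧ ∃ P Q : PGPoint K, P ∈ π ∧ Q ∈ π ∧ P ≠ Q ∧
    ∃ ℓ : Set (PGPoint K), IsLine ℓ ∧ P ∈ ℓ ∧ Q ∈ ℓ ∧ X ∈ ℓ}

/-- `S` is a tangent splash of `ℓ∞` with centre `T`: `S` is the splash of some
order-`q`-subplane meeting `ℓ∞` exactly in the point `T`. -/
def IsTangentSplash (F : Type*) {K : Type*} [Field F] [Field K] [Algebra F K]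
    (S : Set (PGPoint K)) (T : PGPoint K) : Prop :=
  ∃ π : Set (PGPoint K), IsSubplane F π ∧ π ∩ linf K = {T} ∧ S = splash π

/-- The set `t_P`: points of `ℓ∞` lying on the extension of a line of the
subplane `π` through the point `P` (lines of `π` are the lines of `PG(2,K)`
meeting `π` in `q+1` points). -/
def pencilTrace {K : Type*} [Field K] (q : ℕ) (π : Set (PGPoint K))
    (P : PGPoint K) : Set (PGPoint K) :=
  {X : PGPoint K | X ∈ linf K ∧ ∃ ℓ : Set (PGPoint K), IsLine ℓ ∧ P ∈ ℓ ∧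
    (π ∩ ℓ).ncard = q + 1 ∧ X ∈ ℓ}

section aux

variable {F K : Type} [Field F] [Field K] [Algebra F K]

def I3 (a b c : Fin 3 → K) : Prop :=
  ∀ x y z : K, x • a + y • b + z • c = 0 → x = 0 ∧ y = 0 ∧ z = 0

def I2 (a b : Fin 3 → K) : Prop :=
  ∀ x y : K, x • a + y • b = 0 → x = 0 ∧ y = 0

def J2 (F : Type) {K : Type} [Field F] [Field K] [Algebra F K] (a b : K) : Prop :=
  ∀ x y : F, algebraMap F K x * a + algebraMap F K y * b = 0 → x = 0 ∧ y = 0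

def U2 (F : Type) {K : Type} [Field F] [Field K] [Algebra F K] (a b : K) : Set K :=
  {u | ∃ x y : F, u = algebraMap F K x * a + algebraMap F K y * b}

def comb (F : Type) {K : Type} [Field F] [Field K] [Algebra F K] (a b c : Fin 3 → K) :
    Set (Fin 3 → K) :=
  {v | ∃ x y z : F, v = algebraMap F K x • a + algebraMap F K y • b + algebraMap F K z • c}

def Pts (M : Set (Fin 3 → K)) : Set (PGPoint K) :=
  {P | ∃ v ∈ M, ∃ h : v ≠ 0, P = Projectivization.mk K v h}

def Sp (t w : Fin 3 → K) (U : Set K) : Set (PGPoint K) :=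
  {P | (∃ h : t ≠ 0, P = Projectivization.mk K t h) ∨
    ∃ u ∈ U, ∃ h : w + u • t ≠ 0, P = Projectivization.mk K (w + u • t) h}

lemma mk_eq {v w : Fin 3 → K} (hv : v ≠ 0) (hw : w ≠ 0) :
    Projectivization.mk K v hv = Projectivization.mk K w hw ↔ ∃ a : K, a ≠ 0 ∧ v = a • w := by
  rw [Projectivization.mk_eq_mk_iff']
  constructor
  · rintro ⟨a, rfl⟩
    exact ⟨a, by rintro rfl; simp at hv, rfl⟩
  · rintro ⟨a, -, rfl⟩
    exact ⟨a, rfl⟩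

lemma ex_mk (P : PGPoint K) : ∃ v, ∃ h : v ≠ 0, P = Projectivization.mk K v h :=
  ⟨P.rep, P.rep_nonzero, P.mk_rep.symm⟩

lemma mem_linf {v : Fin 3 → K} (hv : v ≠ 0) : Projectivization.mk K v hv ∈ linf K ↔ v 2 = 0 := by
  obtain ⟨a, ha⟩ := Projectivization.exists_smul_eq_mk_rep K v hv
  simp only [linf, Set.mem_ofPred_eq, ← ha]
  simp [Units.smul_def]

lemma I3_iff {a b c : Fin 3 → K} : I3 a b c ↔ LinearIndependent K ![a, b, c] := by
  rw [Fintype.linearIndependent_iff]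
  constructor
  · intro h g hg i
    have := h (g 0) (g 1) (g 2) (by simpa [Fin.sum_univ_three] using hg)
    fin_cases i <;> simp [this]
  · intro h x y z hh
    have := h ![x, y, z] (by simpa [Fin.sum_univ_three] using hh)
    exact ⟨this 0, this 1, this 2⟩

lemma I2_iff {a b : Fin 3 → K} : I2 a b ↔ LinearIndependent K ![a, b] := by
  rw [LinearIndependent.pair_iff]; rfl

lemma I3_of {a b c : Fin 3 → K} (h : I2 a b) (hc : ∀ x y : K, c ≠ x • a + y • b) : I3 a b c := by
  intro x y z hh
  have hz : z = 0 := by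
    by_contra hz
    apply hc (-x / z) (-y / z)
    have : c = z⁻¹ • (z • c) := by rw [smul_smul, inv_mul_cancel₀ hz, one_smul]
    rw [this, show z • c = -x • a + -y • b by linear_combination (norm := module) hh]
    simp only [smul_add, smul_smul]; congr 2 <;> ring
  subst hz
  have := h x y (by simpa using hh)
  exact ⟨this.1, this.2, rfl⟩

lemma I2_of {a b : Fin 3 → K} (ha : a ≠ 0) (hb : ∀ x : K, b ≠ x • a) : I2 a b := by
  intro x y hh
  have hz : y = 0 := by
    by_contra hz
    apply hb (-x / y)
    have : b = y⁻¹ • (y • b) := by rw [smul_smul, inv_mul_cancel₀ hz, one_smul]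
    rw [this, show y • b = -x • a by linear_combination (norm := module) hh]
    simp only [smul_smul]; congr 1; ring
  subst hz
  simp [ha] at hh
  exact ⟨hh, rfl⟩

lemma I3.span {a b c : Fin 3 → K} (h : I3 a b c) (v : Fin 3 → K) :
    ∃ x y z : K, v = x • a + y • b + z • c := by
  have h2 := (I3_iff.1 h).span_eq_top_of_card_eq_finrank (by simp)
  have : v ∈ Submodule.span K (Set.range ![a, b, c]) := by rw [h2]; trivial
  rw [show Set.range ![a, b, c] = {a, b, c} by
    ext u; simp [eq_comm]; tauto
    ] at this
  obtain ⟨x, y, z, h⟩ := Submodule.mem_span_triple.1 this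
  exact ⟨x, y, z, h.symm⟩

lemma mem_comb_iff {a b c v : Fin 3 → K} :
    v ∈ comb F a b c ↔ v ∈ Submodule.span F (Set.range ![a, b, c]) := by
  rw [show Set.range ![a, b, c] = {a, b, c} by
    ext u; simp [eq_comm]; tauto
    , Submodule.mem_span_triple]
  simp only [comb, Set.mem_ofPred_eq, algebraMap_smul]
  constructor <;> rintro ⟨x, y, z, h⟩ <;> exact ⟨x, y, z, h.symm⟩

lemma comb_eq {a b c a' b' c' : Fin 3 → K} (h : I3 a b c) (h' : I3 a' b' c')
    (ha : a' ∈ comb F a b c) (hb : b' ∈ comb F a b c) (hc : c' ∈ comb F a b c) :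
    comb F a b c = comb F a' b' c' := by
  have key : Submodule.span F (Set.range ![a', b', c']) = Submodule.span F (Set.range ![a, b, c]) := by
    have hfd : FiniteDimensional F (Submodule.span F (Set.range ![a, b, c])) :=
      FiniteDimensional.span_of_finite F (Set.finite_range _)
    apply Submodule.eq_of_le_of_finrank_eq
    · rw [Submodule.span_le]
      rintro _ ⟨i, rfl⟩
      fin_cases i
      · exact mem_comb_iff.1 ha
      · exact mem_comb_iff.1 hb
      · exact mem_comb_iff.1 hc
    · rw [finrank_span_eq_card ((I3_iff.1 h').restrict_scalars' F),
        finrank_span_eq_card ((I3_iff.1 h).restrict_scalars' F)]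
  ext v
  rw [mem_comb_iff, mem_comb_iff, key]

lemma isSubplane_iff {S : Set (PGPoint K)} :
    IsSubplane F S ↔ ∃ a b c : Fin 3 → K, I3 a b c ∧ S = Pts (comb F a b c) := by
  have key : ∀ f : (Fin 3 → K) ≃ₗ[K] (Fin 3 → K), hmap f '' basePlane F K =
      Pts (comb F (f (Pi.single 0 1)) (f (Pi.single 1 1)) (f (Pi.single 2 1))) := by
    intro f
    have hf : ∀ v : Fin 3 → K, f v = v 0 • (f (Pi.single 0 1)) + v 1 • (f (Pi.single 1 1)) +
        v 2 • (f (Pi.single 2 1)) := by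
      intro v
      simp only [← map_smul, ← map_add]
      congr 1
      ext i
      fin_cases i <;> simp
    ext P
    constructor
    · rintro ⟨_, ⟨v, hv, rfl, hr⟩, rfl⟩
      choose x hx using hr
      refine ⟨f v, ⟨x 0, x 1, x 2, ?_⟩, by simpa using hv, ?_⟩
      · rw [hf v, hx, hx, hx]
      · simp [hmap, Projectivization.map_mk]
    · rintro ⟨v, ⟨x, y, z, hv⟩, h0, rfl⟩
      have : v = f ![algebraMap F K x, algebraMap F K y, algebraMap F K z] := by
        rw [hv, hf ![_, _, _]]; simp
      subst this
      have h1 : (![algebraMap F K x, algebraMap F K y, algebraMap F K z] : Fin 3 → K) ≠ 0 := by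
        intro h; rw [h] at h0; simp at h0
      refine ⟨Projectivization.mk K _ h1, ⟨_, h1, rfl, ?_⟩, ?_⟩
      · intro i; fin_cases i <;> simp
      · simp [hmap, Projectivization.map_mk]
  constructor
  · rintro ⟨f, rfl⟩
    refine ⟨_, _, _, ?_, key f⟩
    intro x y z h
    simp only [← map_smul, ← map_add] at h
    have h := f.map_eq_zero_iff.1 h
    refine ⟨by simpa using congrFun h 0, by simpa using congrFun h 1, by simpa using congrFun h 2⟩
  · rintro ⟨a, b, c, h, rfl⟩
    let B := basisOfLinearIndependentOfCardEqFinrank (I3_iff.1 h) (by simp)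
    refine ⟨B.equivFun.symm, ?_⟩
    rw [key]
    simp [B]

lemma mem_line {W : Submodule K (Fin 3 → K)} {v : Fin 3 → K} (hv : v ≠ 0) :
    (Projectivization.mk K v hv).submodule ≤ W ↔ v ∈ W := by
  rw [Projectivization.submodule_mk, Submodule.span_singleton_le_iff_mem]

lemma I2_of_ne {v w : Fin 3 → K} (hv : v ≠ 0) (hw : w ≠ 0)
    (h : Projectivization.mk K v hv ≠ Projectivization.mk K w hw) : I2 v w := by
  apply I2_of hv
  intro x hx
  apply h
  symm
  rw [mk_eq]
  exact ⟨x, by rintro rfl; simp at hx; exact hw hx, hx⟩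

lemma I2.ne {v w : Fin 3 → K} (h : I2 v w) : v ≠ 0 ∧ w ≠ 0 ∧
    ∀ (hv : v ≠ 0) (hw : w ≠ 0), Projectivization.mk K v hv ≠ Projectivization.mk K w hw := by
  refine ⟨?_, ?_, ?_⟩
  · rintro rfl; simpa using (h 1 0 (by simp)).1
  · rintro rfl; simpa using (h 0 1 (by simp)).2
  · intro hv hw he
    obtain ⟨a, ha, rfl⟩ := (mk_eq hv hw).1 he
    simpa using (h 1 (-a) (by simp)).1

lemma I2.span_line {v w : Fin 3 → K} (h : I2 v w) {W : Submodule K (Fin 3 → K)}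
    (hW : Module.finrank K W = 2) (hv : v ∈ W) (hw : w ∈ W) (u : Fin 3 → K) :
    u ∈ W ↔ ∃ x y : K, u = x • v + y • w := by
  have : Submodule.span K (Set.range ![v, w]) = W := by
    apply Submodule.eq_of_le_of_finrank_eq
    · rw [Submodule.span_le]
      rintro _ ⟨i, rfl⟩
      fin_cases i <;> simpa
    · rw [finrank_span_eq_card (I2_iff.1 h), hW]; simp
  rw [← this, show Set.range ![v, w] = {v, w} by
    ext u; simp [eq_comm]; tauto, Submodule.mem_span_pair]
  constructor <;> rintro ⟨x, y, h⟩ <;> exact ⟨x, y, h.symm⟩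

lemma I2.exists_line {v w : Fin 3 → K} (h : I2 v w) : ∃ W : Submodule K (Fin 3 → K),
    Module.finrank K W = 2 ∧ v ∈ W ∧ w ∈ W := by
  refine ⟨Submodule.span K (Set.range ![v, w]), ?_, ?_, ?_⟩
  · rw [finrank_span_eq_card (I2_iff.1 h)]; simp
  · exact Submodule.subset_span ⟨0, rfl⟩
  · exact Submodule.subset_span ⟨1, rfl⟩

lemma mem_splash {M : Set (Fin 3 → K)} {v : Fin 3 → K} (hv : v ≠ 0) :
    Projectivization.mk K v hv ∈ splash (Pts M) ↔ v 2 = 0 ∧ ∃ p ∈ M, ∃ r ∈ M, I2 p r ∧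
      ∃ x y : K, v = x • p + y • r := by
  constructor
  · rintro ⟨h1, _, _, ⟨p, hp, hp0, rfl⟩, ⟨r, hr, hr0, rfl⟩, hne, _, ⟨W, hW, rfl⟩, h2, h3, h4⟩
    have hI := I2_of_ne _ _ hne
    refine ⟨(mem_linf _).1 h1, p, hp, r, hr, hI, ?_⟩
    exact (hI.span_line hW ((mem_line _).1 h2) ((mem_line _).1 h3) v).1 ((mem_line _).1 h4)
  · rintro ⟨h1, p, hp, r, hr, hI, x, y, rfl⟩
    obtain ⟨W, hW, h2, h3⟩ := hI.exists_line
    obtain ⟨hp0, hr0, hne⟩ := hI.ne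
    exact ⟨(mem_linf _).2 h1, _, _, ⟨p, hp, hp0, rfl⟩, ⟨r, hr, hr0, rfl⟩, hne hp0 hr0, _,
      ⟨W, hW, rfl⟩, (mem_line _).2 h2, (mem_line _).2 h3, 
      (mem_line _).2 (W.add_mem (W.smul_mem _ h2) (W.smul_mem _ h3))⟩

lemma I3.coord {a b c : Fin 3 → K} (h : I3 a b c) {x y z x' y' z' : K}
    (e : x • a + y • b + z • c = x' • a + y' • b + z' • c) : x = x' ∧ y = y' ∧ z = z' := by
  have := h (x - x') (y - y') (z - z') (by linear_combination (norm := module) e)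
  simpa [sub_eq_zero] using this

lemma I2.coord {a b : Fin 3 → K} (h : I2 a b) {x y x' y' : K}
    (e : x • a + y • b = x' • a + y' • b) : x = x' ∧ y = y' := by
  have := h (x - x') (y - y') (by linear_combination (norm := module) e)
  simpa [sub_eq_zero] using this

lemma I3.left {a b c : Fin 3 → K} (h : I3 a b c) : I2 a b := by
  intro x y e
  have := h x y 0 (by simpa using e)
  exact ⟨this.1, this.2.1⟩

lemma J2.ne {a b : K} (h : J2 F a b) : a ≠ 0 ∧ b ≠ 0 := by
  constructor
  · rintro rfl; simpa using (h 1 0 (by simp)).1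
  · rintro rfl; simpa using (h 0 1 (by simp)).2

lemma mem_Sp {t w v : Fin 3 → K} {U : Set K} (hI : I2 t w) (hv : v ≠ 0) :
    Projectivization.mk K v hv ∈ Sp t w U ↔ ∃ s : K, s ≠ 0 ∧
      (v = s • t ∨ ∃ u ∈ U, v = s • (w + u • t)) := by
  constructor
  · rintro (⟨h, he⟩ | ⟨u, hu, h, he⟩)
    · obtain ⟨s, hs, rfl⟩ := (mk_eq _ _).1 he
      exact ⟨s, hs, Or.inl rfl⟩
    · obtain ⟨s, hs, rfl⟩ := (mk_eq _ _).1 he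
      exact ⟨s, hs, Or.inr ⟨u, hu, rfl⟩⟩
  · rintro ⟨s, hs, (rfl | ⟨u, hu, rfl⟩)⟩
    · exact Or.inl ⟨hI.ne.1, (mk_eq _ _).2 ⟨s, hs, rfl⟩⟩
    · have h0 : w + u • t ≠ 0 := by
        intro h; rw [h] at hv; simp at hv
      exact Or.inr ⟨u, hu, h0, (mk_eq _ _).2 ⟨s, hs, rfl⟩⟩

lemma I3.I2w {t m n : Fin 3 → K} (hI : I3 t m n) {p r : K} (hp : p ≠ 0) :
    I2 t (p • m - r • n) := by
  intro x y e
  have := hI x (y * p) (-y * r) (by rw [← e]; module)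
  exact ⟨this.1, by simpa [hp] using this.2.1⟩

lemma splash_eq {t m n : Fin 3 → K} (hI : I3 t m n) (ht : t 2 = 0) (hJ : J2 F (m 2) (n 2)) :
    splash (Pts (comb F t m n)) = Sp t (n 2 • m - m 2 • n) (U2 F (m 2) (n 2)) := by
  have hm0 := hJ.ne.1
  have hn0 := hJ.ne.2
  ext P
  obtain ⟨v, hv, rfl⟩ := ex_mk P
  rw [mem_splash, mem_Sp (hI.I2w hn0)]
  constructor
  · rintro ⟨h2, _, ⟨x0, x1, x2, rfl⟩, _, ⟨y0, y1, y2, rfl⟩, hpr, α, β, rfl⟩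
    set i := algebraMap F K with hi
    have hAB : (α * i x1 + β * i y1) * m 2 + (α * i x2 + β * i y2) * n 2 = 0 := by
      simp [ht] at h2
      linear_combination h2
    have e0 : α • (i x0 • t + i x1 • m + i x2 • n) + β • (i y0 • t + i y1 • m + i y2 • n) =
      (α * i x0 + β * i y0) • t + (α * i x1 + β * i y1) • m + (α * i x2 + β * i y2) • n := by module
    rw [e0] at hv ⊢
    set A := α * i x1 + β * i y1 with hA
    set B := α * i x2 + β * i y2 with hB
    by_cases hD : x1 * y2 - x2 * y1 = 0
    · have hDi : i x1 * i y2 - i x2 * i y1 = 0 := by rw [← map_mul, ← map_mul, ← map_sub, hD, map_zero]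
      have hinj : ∀ x y : F, i x * m 2 + i y * n 2 ≠ 0 ∨ (x = 0 ∧ y = 0) := by
        intro x y
        by_cases h : i x * m 2 + i y * n 2 = 0
        · exact Or.inr (hJ _ _ h)
        · exact Or.inl h
      have hA0 : A = 0 ∧ B = 0 := by
        have q1 : A * (i y1 * m 2 + i y2 * n 2) = 0 := by
          linear_combination i y1 * hAB + α * n 2 * hDi + (i y2 * n 2 * (hA - hA))
        have q1' : B * (i y1 * m 2 + i y2 * n 2) = 0 := by
          linear_combination i y2 * hAB - α * m 2 * hDi
        have q2 : A * (i x1 * m 2 + i x2 * n 2) = 0 := by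
          linear_combination i x1 * hAB - β * n 2 * hDi
        have q2' : B * (i x1 * m 2 + i x2 * n 2) = 0 := by
          linear_combination i x2 * hAB + β * m 2 * hDi
        rcases hinj y1 y2 with h | ⟨rfl, rfl⟩
        · simp [h] at q1 q1'
          exact ⟨q1, q1'⟩
        · rcases hinj x1 x2 with h | ⟨rfl, rfl⟩
          · simp [h] at q2 q2'
            exact ⟨q2, q2'⟩
          · simp [hA, hB]
      rw [hA0.1, hA0.2] at hv ⊢
      refine ⟨α * i x0 + β * i y0, ?_, Or.inl (by simp)⟩
      intro h; simp [h] at hv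
    · set D := x1 * y2 - x2 * y1 with hDd
      have hDi : i D ≠ 0 := by simpa using hD
      have hDi' : i D = i x1 * i y2 - i x2 * i y1 := by simp [hDd]
      have hBe : B = - (A / n 2) * m 2 := by
        field_simp; linear_combination hAB
      have hs : A / n 2 ≠ 0 := by
        intro hs
        have hA0 : A = 0 := by simpa [hn0] using hs
        have hB0 : B = 0 := by rw [hBe, hs]; simp
        have ha : α * i D = 0 := by
          rw [hDi']; linear_combination i y2 * hA0 - i y1 * hB0 
        have hb : β * i D = 0 := by
          rw [hDi']; linear_combination - i x2 * hA0 + i x1 * hB0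
        simp [hDi] at ha hb
        apply hv
        rw [hA0, hB0, ha, hb]; simp
      refine ⟨A / n 2, hs, Or.inr ⟨_, ⟨(x0 * y1 - y0 * x1) / D, (x0 * y2 - y0 * x2) / D, rfl⟩, ?_⟩⟩
      rw [hBe]
      have : α * i x0 + β * i y0 = A / n 2 * (i ((x0 * y1 - y0 * x1) / D) * m 2 + i ((x0 * y2 - y0 * x2) / D) * n 2) := by
        simp only [map_div₀, map_sub, map_mul]
        field_simp
        rw [hDi']
        linear_combination - (i x0 * i y1 - i y0 * i x1) * hAB
      rw [this]
      have h3 : A = A / n 2 * n 2 := by field_simp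
      generalize A / n 2 = s at *
      rw [h3]
      change _ = s • (n 2 • m - m 2 • n + (i ((x0 * y1 - y0 * x1) / D) * m 2 +
        i ((x0 * y2 - y0 * x2) / D) * n 2) • t)
      generalize i ((x0 * y1 - y0 * x1) / D) = g1
      generalize i ((x0 * y2 - y0 * x2) / D) = g2
      module
  · rintro ⟨s, hs, (rfl | ⟨_, ⟨b, a, rfl⟩, rfl⟩)⟩
    · refine ⟨by simp [ht], t, ⟨1, 0, 0, by simp⟩, m, ⟨0, 1, 0, by simp⟩, hI.left, s, 0, by simp⟩
    · refine ⟨?_, m + algebraMap F K a • t, ⟨a, 1, 0, by simp [add_comm]⟩,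
        n - algebraMap F K b • t, ⟨-b, 0, 1, by simp; module⟩, ?_, s * n 2, - s * m 2, by module⟩
      · simp [ht]; right; ring
      · intro x y e
        have := hI (x * algebraMap F K a - y * algebraMap F K b) x y (by rw [← e]; module)
        exact this.2

lemma quad {z : K} (h3 : Module.finrank F K = 3) {p r s : F} (hp : p ≠ 0 ∨ r ≠ 0 ∨ s ≠ 0)
    (h : algebraMap F K p * z ^ 2 + algebraMap F K r * z + algebraMap F K s = 0) :
    ∃ x : F, z = algebraMap F K x := by
  have hfd : FiniteDimensional F K := FiniteDimensional.of_finrank_pos (by omega)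
  have hd := minpoly.degree_dvd (K := F) (x := z) (Algebra.IsIntegral.isIntegral z)
  rw [h3] at hd
  have hle : (minpoly F z).natDegree ≤ 2 := by
    have hne : (Polynomial.C p * Polynomial.X ^ 2 + Polynomial.C r * Polynomial.X + Polynomial.C s) ≠ 0 := by
      intro h0
      have c0 := congrArg (fun f => Polynomial.coeff f 0) h0
      have c1 := congrArg (fun f => Polynomial.coeff f 1) h0
      have c2 := congrArg (fun f => Polynomial.coeff f 2) h0
      simp [Polynomial.coeff_X, Polynomial.coeff_C] at c0 c1 c2
      tauto
    refine (Polynomial.natDegree_le_natDegree (minpoly.degree_le_of_ne_zero F z hne (by simpa using h))).trans ?_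
    compute_degree
  have h1 : (minpoly F z).natDegree = 1 := by
    rcases (Nat.dvd_prime Nat.prime_three).1 hd with h | h <;> omega
  obtain ⟨x, hx⟩ := (minpoly.natDegree_eq_one_iff).1 h1
  exact ⟨x, hx.symm⟩

lemma stab (h3 : Module.finrank F K = 3) {a b μ : K} (hJ : J2 F a b)
    (h : ∀ u ∈ U2 F a b, μ * u ∈ U2 F a b) : ∃ x : F, μ = algebraMap F K x := by
  obtain ⟨x, y, h1⟩ := h a ⟨1, 0, by simp⟩
  obtain ⟨z, w, h2⟩ := h b ⟨0, 1, by simp⟩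
  apply quad h3 (p := 1) (r := -(x + w)) (s := x * w - y * z) (by simp)
  have ha := hJ.ne.1
  apply mul_left_cancel₀ ha
  simp only [map_one, map_neg, map_add, map_sub, map_mul]
  linear_combination (μ - algebraMap F K w) * h1 + algebraMap F K y * h2

lemma half {t w t' w' : Fin 3 → K} {s s' u0 u0' a b a' b' : K} 
    (hI' : I2 t' w') (h1 : t' = s • (w + u0 • t)) (h2 : t = s' • (w' + u0' • t'))
    (hs : s ≠ 0) (hs' : s' ≠ 0) (hu0 : u0 ∈ U2 F a b) (hu0' : u0' ∈ U2 F a' b')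
    (hI : I2 t w)
    (h : Sp t w (U2 F a b) ⊆ Sp t' w' (U2 F a' b')) (u : K) (hu : u ∈ U2 F a b) (hu1 : u ≠ 0) :
    (s * s')⁻¹ / u ∈ U2 F a' b' := by
  have hadd : u0 + u ∈ U2 F a b := by
    obtain ⟨x, y, rfl⟩ := hu0
    obtain ⟨x', y', rfl⟩ := hu
    exact ⟨x + x', y + y', by simp; ring⟩
  have h0 : w + (u0 + u) • t ≠ 0 := by
    intro e
    have := hI (u0 + u) 1 (by rw [← e]; module)
    simp at this
  have hm := h ((mem_Sp hI h0).2 ⟨1, one_ne_zero, Or.inr ⟨_, hadd, by simp⟩⟩)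
  have hw : w + (u0 + u) • t = (s⁻¹ + u * s' * u0') • t' + (u * s') • w' := by
    have : w + u0 • t = s⁻¹ • t' := by rw [h1, smul_smul, inv_mul_cancel₀ hs, one_smul]
    calc w + (u0 + u) • t = (w + u0 • t) + u • t := by module
      _ = s⁻¹ • t' + u • (s' • (w' + u0' • t')) := by rw [this, ← h2]
      _ = _ := by module
  obtain ⟨r, hr, hh⟩ := (mem_Sp hI' h0).1 hm
  rw [hw] at hh
  rcases hh with hh | ⟨u', hu', hh⟩
  · have := (hI'.coord (x' := r) (y' := 0) (by rw [hh]; simp)).2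
    simp [hu1, hs'] at this
  · have := hI'.coord (x' := r * u') (y' := r) (by rw [hh]; module)
    obtain ⟨e1, rfl⟩ := this
    have : (s * s')⁻¹ / u = u' - u0' := by
      field_simp at e1 ⊢
      linear_combination e1
    rw [this]
    obtain ⟨x, y, rfl⟩ := hu0'
    obtain ⟨x', y', rfl⟩ := hu'
    exact ⟨x' - x, y' - y, by simp; ring⟩

lemma centre (h3 : Module.finrank F K = 3) {t w t' w' : Fin 3 → K} {a b a' b' : K}
    (hJ : J2 F a b) (hI : I2 t w) (hI' : I2 t' w')
    (h : Sp t w (U2 F a b) = Sp t' w' (U2 F a' b')) : ∃ k : K, k ≠ 0 ∧ t' = k • t := by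
  by_contra hc
  have m1 : Projectivization.mk K t' hI'.ne.1 ∈ Sp t w (U2 F a b) := by
    rw [h]; exact Or.inl ⟨_, rfl⟩
  have m2 : Projectivization.mk K t hI.ne.1 ∈ Sp t' w' (U2 F a' b') := by
    rw [← h]; exact Or.inl ⟨_, rfl⟩
  obtain ⟨s, hs, (m1 | ⟨u0, hu0, m1⟩)⟩ := (mem_Sp hI _).1 m1
  · exact hc ⟨s, hs, m1⟩
  obtain ⟨s', hs', (m2 | ⟨u0', hu0', m2⟩)⟩ := (mem_Sp hI' _).1 m2
  · exact hc ⟨s'⁻¹, inv_ne_zero hs', by rw [m2, smul_smul, inv_mul_cancel₀ hs', one_smul]⟩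
  have k1 := half hI' m1 m2 hs hs' hu0 hu0' hI h.subset
  have k2 := half hI m2 m1 hs' hs hu0' hu0 hI' h.symm.subset
  have ha := hJ.ne.1
  have hb := hJ.ne.2
  have hab : a + b ≠ 0 := by
    intro e
    simpa using (hJ 1 1 (by simpa using e)).1
  obtain ⟨x, y, e1⟩ := k1 a ⟨1, 0, by simp⟩ ha
  obtain ⟨x', y', e2⟩ := k1 b ⟨0, 1, by simp⟩ hb
  have e3 := k2 ((s * s')⁻¹ / a + (s * s')⁻¹ / b) ⟨x + x', y + y', by rw [e1, e2]; simp; ring⟩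
    (by
      have : (s * s')⁻¹ / a + (s * s')⁻¹ / b = (s * s')⁻¹ * (a + b) / (a * b) := by
        field_simp; ring
      rw [this]
      positivity)
  have e4 : (s' * s)⁻¹ / ((s * s')⁻¹ / a + (s * s')⁻¹ / b) = a * b / (a + b) := by
    have : (s * s')⁻¹ / a + (s * s')⁻¹ / b = (s * s')⁻¹ * (a + b) / (a * b) := by
        field_simp; ring
    rw [this]; field_simp
  rw [e4] at e3
  obtain ⟨c, d, e3⟩ := e3
  rw [div_eq_iff hab] at e3
  obtain ⟨z, hz⟩ := quad h3 (z := a / b) (p := c) (r := c + d - 1) (s := d) (by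
      by_contra! hh
      obtain ⟨rfl, h2, rfl⟩ := hh
      simp at h2) (by
      simp only [map_sub, map_add, map_one]
      field_simp
      linear_combination -e3)
  have := (hJ 1 (-z) (by simp; rw [← hz]; field_simp; ring)).1
  simp at this

lemma scal (h3 : Module.finrank F K = 3) {a b a' b' : K} (hJ : J2 F a b) (hJ' : J2 F a' b') :
    ∃ k : K, k ≠ 0 ∧ ∀ v, v ∈ U2 F a b ↔ k * v ∈ U2 F a' b' := by
  have hfd : FiniteDimensional F K := FiniteDimensional.of_finrank_pos (by omega)
  have key : ∀ {a b : K}, J2 F a b → ∃ f : Module.Dual F K, f ≠ 0 ∧ ∀ v, v ∈ U2 F a b ↔ f v = 0 := by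
    intro a b hJ
    have hU : ∀ v, v ∈ U2 F a b ↔ v ∈ Submodule.span F (Set.range ![a, b]) := by
      intro v
      rw [show Set.range ![a, b] = {a, b} by ext u; simp [eq_comm]; tauto,
        Submodule.mem_span_pair]
      simp only [U2, Set.mem_ofPred_eq, Algebra.smul_def, eq_comm]
    have hli : LinearIndependent F ![a, b] := by
      rw [LinearIndependent.pair_iff]
      intro x y h
      exact hJ x y (by simpa [Algebra.smul_def] using h)
    have hr : Module.finrank F (Submodule.span F (Set.range ![a, b])) = 2 := by
      rw [finrank_span_eq_card hli]; simp
    have hlt : Submodule.span F (Set.range ![a, b]) < ⊤ := by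
      rw [lt_top_iff_ne_top]; intro h; rw [h, finrank_top, h3] at hr; omega
    obtain ⟨f, hf, hle⟩ := Submodule.exists_le_ker_of_lt_top _ hlt
    refine ⟨f, hf, fun v => ?_⟩
    have : Submodule.span F (Set.range ![a, b]) = LinearMap.ker f := by
      apply Submodule.eq_of_le_of_finrank_le hle
      have := Module.Dual.finrank_ker_add_one_of_ne_zero hf
      omega
    rw [hU, this, LinearMap.mem_ker]
  obtain ⟨f, hf, hU⟩ := key hJ
  obtain ⟨g, hg, hU'⟩ := key hJ'
  let Φ : K →ₗ[F] Module.Dual F K := 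
    LinearMap.mk₂ F (fun k v => g (k * v)) (by intros; simp [add_mul]) (by intros; simp)
      (by intros; simp [mul_add]) (by intros; simp)
  have hinj : Function.Injective Φ := by
    rw [injective_iff_map_eq_zero]
    intro k hk
    by_contra hk0
    apply hg
    ext v
    have := LinearMap.congr_fun hk (k⁻¹ * v)
    simpa [Φ, hk0] using this
  have hsurj : Function.Surjective Φ := 
    (LinearMap.injective_iff_surjective_of_finrank_eq_finrank (by rw [Subspace.dual_finrank_eq])).1 hinj
  obtain ⟨k, hk⟩ := hsurj f
  refine ⟨k, ?_, fun v => ?_⟩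
  · rintro rfl
    simp at hk; exact hf hk.symm
  · rw [hU, hU', ← hk]; rfl

lemma I3.rot {a b c : Fin 3 → K} (h : I3 a b c) : I3 c a b := by
  intro x y z e
  have := h y z x (by rw [← e]; module)
  tauto

lemma comb_smul {a b c v : Fin 3 → K} (x : F) (h : v ∈ comb F a b c) :
    algebraMap F K x • v ∈ comb F a b c := by
  obtain ⟨y, z, w, rfl⟩ := h
  refine ⟨x * y, x * z, x * w, ?_⟩
  simp only [map_mul]
  module

lemma ext3 {e0 e1 e2 a b : Fin 3 → K} (h : I3 e0 e1 e2) (hab : I2 a b) :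
    ∃ c ∈ comb F e0 e1 e2, I3 a b c := by
  obtain ⟨W, hW, ha, hb⟩ := hab.exists_line
  have key : ∀ c ∈ comb F e0 e1 e2, c ∉ W → I3 a b c := by
    intro c _ hcW
    apply I3_of hab
    intro x y e
    exact hcW ((hab.span_line hW ha hb c).2 ⟨x, y, e⟩)
  by_contra! hc
  have h0 : e0 ∈ W := by
    by_contra hh; exact hc e0 ⟨1, 0, 0, by simp⟩ (key _ ⟨1, 0, 0, by simp⟩ hh)
  have h1 : e1 ∈ W := by
    by_contra hh; exact hc e1 ⟨0, 1, 0, by simp⟩ (key _ ⟨0, 1, 0, by simp⟩ hh)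
  have h2 : e2 ∈ W := by
    by_contra hh; exact hc e2 ⟨0, 0, 1, by simp⟩ (key _ ⟨0, 0, 1, by simp⟩ hh)
  have : W = ⊤ := by
    rw [Submodule.eq_top_iff']
    intro v
    obtain ⟨x, y, z, rfl⟩ := h.span v
    exact W.add_mem (W.add_mem (W.smul_mem _ h0) (W.smul_mem _ h1)) (W.smul_mem _ h2)
  rw [this, finrank_top] at hW
  simp at hW

lemma ext2 {e0 e1 e2 a : Fin 3 → K} (h : I3 e0 e1 e2) (ha : a ≠ 0) :
    ∃ c ∈ comb F e0 e1 e2, I2 a c := by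
  by_contra! hc
  have key : ∀ c ∈ comb F e0 e1 e2, ∃ x : K, c = x • a := by
    intro c hcm
    by_contra! hh
    exact hc c hcm (I2_of ha hh)
  obtain ⟨x, hx⟩ := key e0 ⟨1, 0, 0, by simp⟩
  obtain ⟨y, hy⟩ := key e1 ⟨0, 1, 0, by simp⟩
  have := h y (-x) 0 (by rw [hx, hy]; module)
  have hx0 : x = 0 := by simpa using this.2.1
  have : e0 = 0 := by rw [hx, hx0, zero_smul]
  exact h.left.ne.1 this

lemma tang_J2 {t m n : Fin 3 → K} (hI : I3 t m n) (ht0 : t ≠ 0)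
    (h : Pts (comb F t m n) ∩ linf K = {Projectivization.mk K t ht0}) : J2 F (m 2) (n 2) := by
  intro x y e
  by_cases h0 : algebraMap F K x • m + algebraMap F K y • n = 0
  · have := hI 0 (algebraMap F K x) (algebraMap F K y) (by rw [zero_smul, zero_add, h0])
    simpa using this.2
  · have : Projectivization.mk K _ h0 ∈ Pts (comb F t m n) ∩ linf K :=
      ⟨⟨_, ⟨0, x, y, by simp⟩, h0, rfl⟩, (mem_linf _).2 e⟩
    rw [h, Set.mem_singleton_iff, mk_eq] at this
    obtain ⟨a, ha, e⟩ := this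
    have := hI (-a) _ _ (by rw [add_assoc, e]; module)
    simpa using this.2

lemma tang_of {t m n : Fin 3 → K} (hI : I3 t m n) (ht0 : t ≠ 0) (ht : t 2 = 0)
    (hJ : J2 F (m 2) (n 2)) :
    Pts (comb F t m n) ∩ linf K = {Projectivization.mk K t ht0} := by
  ext P
  rw [Set.mem_singleton_iff]
  constructor
  · rintro ⟨⟨_, ⟨x, y, z, rfl⟩, h0, rfl⟩, h2⟩
    rw [mem_linf] at h2
    obtain ⟨rfl, rfl⟩ := hJ y z (by simpa [ht, Algebra.smul_def] using h2)
    rw [mk_eq]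
    refine ⟨algebraMap F K x, ?_, by simp⟩
    intro h; simp [h] at h0
  · rintro rfl
    exact ⟨⟨t, ⟨1, 0, 0, by simp⟩, ht0, rfl⟩, (mem_linf _).2 ht⟩

lemma tang_normal {π : Set (PGPoint K)} {T : PGPoint K} (hπ : IsSubplane F π)
    (hT : π ∩ linf K = {T}) : ∃ t m n : Fin 3 → K, I3 t m n ∧ t 2 = 0 ∧ J2 F (m 2) (n 2) ∧
      (∃ h : t ≠ 0, T = Projectivization.mk K t h) ∧ π = Pts (comb F t m n) := by
  obtain ⟨e0, e1, e2, hI, rfl⟩ := isSubplane_iff.1 hπ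
  have hTm : T ∈ Pts (comb F e0 e1 e2) ∩ linf K := by rw [hT]; rfl
  obtain ⟨⟨t, ht, ht0, rfl⟩, h2⟩ := hTm
  obtain ⟨m, hm, hI2⟩ := ext2 (F := F) hI ht0
  obtain ⟨n, hn, hI3⟩ := ext3 (F := F) hI hI2
  have e := comb_eq hI hI3 ht hm hn
  rw [e] at hT
  exact ⟨t, m, n, hI3, (mem_linf _).1 h2, tang_J2 hI3 ht0 hT, ⟨ht0, rfl⟩, by rw [e]⟩

lemma comb_in {e0 e1 e2 a b m : Fin 3 → K} (hI : I3 e0 e1 e2) (ha : a ∈ comb F e0 e1 e2)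
    (hb : b ∈ comb F e0 e1 e2) (hab : I2 a b) (hm : m ∈ comb F e0 e1 e2) {α β : K}
    (h : m = α • a + β • b) : ∃ x y : F, α = algebraMap F K x ∧ β = algebraMap F K y := by
  obtain ⟨c, hc, hI3⟩ := ext3 (F := F) hI hab
  rw [comb_eq hI hI3 ha hb hc] at hm
  obtain ⟨x, y, z, hm⟩ := hm
  have := hI3.coord (x := α) (y := β) (z := 0) (by rw [← hm, h]; simp)
  exact ⟨x, y, this.1, this.2.1⟩

def comb2 (F : Type) {K : Type} [Field F] [Field K] [Algebra F K] (a b : Fin 3 → K) :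
    Set (Fin 3 → K) :=
  {v | ∃ x y : F, v = algebraMap F K x • a + algebraMap F K y • b}

lemma subline_normal {q : ℕ} (hq : 0 < q) {b : Set (PGPoint K)} (hb : IsSubline F q b) :
    ∃ n1 n2 : Fin 3 → K, I2 n1 n2 ∧ b = Pts (comb2 F n1 n2) := by
  obtain ⟨S, _, hS, ⟨W, hW, rfl⟩, hc, rfl⟩ := hb
  obtain ⟨e0, e1, e2, hI, rfl⟩ := isSubplane_iff.1 hS
  obtain ⟨P, Q, ⟨⟨a, ha, ha0, rfl⟩, haW⟩, ⟨⟨b, hb, hb0, rfl⟩, hbW⟩, hne⟩ :=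
    (Set.one_lt_ncard_iff (Set.finite_of_ncard_ne_zero (by rw [hc]; omega))).1
      (show 1 < Set.ncard _ by rw [hc]; omega)
  have haW := (mem_line ha0).1 haW
  have hbW := (mem_line hb0).1 hbW
  have hab := I2_of_ne _ _ hne
  refine ⟨a, b, hab, ?_⟩
  obtain ⟨c, hcm, hI3⟩ := ext3 (F := F) hI hab
  have ec := comb_eq hI hI3 ha hb hcm
  ext P
  constructor
  · rintro ⟨⟨v, hv, hv0, rfl⟩, hvW⟩
    obtain ⟨α, β, e⟩ := (hab.span_line hW haW hbW v).1 ((mem_line hv0).1 hvW)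
    obtain ⟨x, y, rfl, rfl⟩ := comb_in hI ha hb hab hv e
    exact ⟨v, ⟨x, y, e⟩, hv0, rfl⟩
  · rintro ⟨v, ⟨x, y, e⟩, hv0, rfl⟩
    refine ⟨⟨v, ?_, hv0, rfl⟩, (mem_line hv0).2 ?_⟩
    · rw [ec]; exact ⟨x, y, 0, by simpa using e⟩
    · exact (hab.span_line hW haW hbW v).2 ⟨_, _, e⟩

lemma contain {e0 e1 e2 a b : Fin 3 → K} (hI : I3 e0 e1 e2) (hab : I2 a b)
    (h : Pts (comb2 F a b) ⊆ Pts (comb F e0 e1 e2)) :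
    ∃ g : K, g ≠ 0 ∧ g • a ∈ comb F e0 e1 e2 ∧ g • b ∈ comb F e0 e1 e2 := by
  have key : ∀ v ∈ comb2 F a b, v ≠ 0 → ∃ α : K, α ≠ 0 ∧ α • v ∈ comb F e0 e1 e2 := by
    intro v hv h0
    obtain ⟨w, hw, hw0, e⟩ := h ⟨v, hv, h0, rfl⟩
    obtain ⟨α, hα, rfl⟩ := (mk_eq _ _).1 e.symm
    exact ⟨α, hα, hw⟩
  obtain ⟨α, hα, h1⟩ := key a ⟨1, 0, by simp⟩ hab.ne.1
  obtain ⟨β, hβ, h2⟩ := key b ⟨0, 1, by simp⟩ hab.ne.2.1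
  obtain ⟨g, hg, h3⟩ := key (a + b) ⟨1, 1, by simp⟩ (by
    intro e
    simpa using (hab 1 1 (by simpa using e)).1)
  have hI2 : I2 (α • a) (β • b) := by
    intro x y e
    have := hab (x * α) (y * β) (by rw [← e]; module)
    simpa [hα, hβ] using this
  have eg : g • (a + b) = (g / α) • α • a + (g / β) • β • b := by
    rw [smul_smul, smul_smul, div_mul_cancel₀ _ hα, div_mul_cancel₀ _ hβ, smul_add]
  obtain ⟨x, y, hx, hy⟩ := comb_in hI h1 h2 hI2 h3 eg
  refine ⟨g, hg, ?_, ?_⟩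
  · have := comb_smul x h1
    rwa [← hx, smul_smul, div_mul_cancel₀ _ hα] at this
  · have := comb_smul y h2
    rwa [← hy, smul_smul, div_mul_cancel₀ _ hβ] at this

lemma Pts_scale {a b c : Fin 3 → K} {g : K} (hg : g ≠ 0) :
    Pts (comb F (g • a) (g • b) (g • c)) = Pts (comb F a b c) := by
  ext P
  constructor
  · rintro ⟨_, ⟨x, y, z, rfl⟩, h0, rfl⟩
    have e : algebraMap F K x • g • a + algebraMap F K y • g • b + algebraMap F K z • g • c =
      g • (algebraMap F K x • a + algebraMap F K y • b + algebraMap F K z • c) := by module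
    have h1 : algebraMap F K x • a + algebraMap F K y • b + algebraMap F K z • c ≠ 0 := by
      intro h; rw [e, h] at h0; simp at h0
    exact ⟨_, ⟨x, y, z, rfl⟩, h1, (mk_eq _ _).2 ⟨g, hg, e⟩⟩
  · rintro ⟨_, ⟨x, y, z, rfl⟩, h0, rfl⟩
    have e : algebraMap F K x • g • a + algebraMap F K y • g • b + algebraMap F K z • g • c =
      g • (algebraMap F K x • a + algebraMap F K y • b + algebraMap F K z • c) := by module
    refine ⟨_, ⟨x, y, z, rfl⟩, ?_, ((mk_eq _ _).2 ⟨g, hg, e⟩).symm⟩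
    rw [e]; exact smul_ne_zero hg h0

lemma uniq_normal {π : Set (PGPoint K)} {T : PGPoint K} (hπ : IsSubplane F π)
    (hT : π ∩ linf K = {T}) {a b : Fin 3 → K} (hab : I2 a b) (hsub : Pts (comb2 F a b) ⊆ π)
    (hdisj : Pts (comb2 F a b) ∩ linf K = ∅) :
    ∃ t : Fin 3 → K, I3 t a b ∧ t 2 = 0 ∧ π = Pts (comb F t a b) := by
  obtain ⟨t, m, n, hI, ht, hJ, ⟨ht0, rfl⟩, rfl⟩ := tang_normal hπ hT
  obtain ⟨g, hg, hga, hgb⟩ := contain hI hab hsub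
  have hI2 : I2 (g • a) (g • b) := by
    intro x y e
    have := hab (x * g) (y * g) (by rw [← e]; module)
    simpa [hg] using this
  have htm : t ∈ comb F t m n := ⟨1, 0, 0, by simp⟩
  have hI3 : I3 t (g • a) (g • b) := by
    apply I3.rot
    apply I3_of hI2
    intro x y e
    obtain ⟨x, y, rfl, rfl⟩ := comb_in hI hga hgb hI2 htm e
    have e' : t = g • (algebraMap F K x • a + algebraMap F K y • b) := by rw [e]; module
    have h1 : algebraMap F K x • a + algebraMap F K y • b ≠ 0 := by
      intro h; rw [e', h] at ht0; simp at ht0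
    have : Projectivization.mk K _ h1 ∈ Pts (comb2 F a b) ∩ linf K := by
      refine ⟨⟨_, ⟨x, y, rfl⟩, h1, rfl⟩, ?_⟩
      rw [mem_linf]
      rw [e', Pi.smul_apply, smul_eq_mul] at ht
      simpa [hg] using ht
    rw [hdisj] at this
    exact this
  have ec := comb_eq hI hI3 htm hga hgb
  have et : t = g • (g⁻¹ • t) := by rw [smul_smul, mul_inv_cancel₀ hg, one_smul]
  refine ⟨g⁻¹ • t, ?_, by simp [ht], ?_⟩
  · intro x y z e
    have := hI3 (x * g⁻¹) (y * g⁻¹) (z * g⁻¹) (by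
      rw [← e]
      simp only [smul_smul, mul_assoc, inv_mul_cancel₀ hg, mul_one])
    simpa [hg] using this
  · rw [ec, ← Pts_scale (F := F) (a := g⁻¹ • t) hg, ← et]

end aux

/-- given a tangent splash `S` of `ℓ∞` with centre `T` and an
order-`q`-subline `b` disjoint from `ℓ∞` whose spanning line meets `ℓ∞` in a point of
`S \ {T}`, there is a unique order-`q`-subplane tangent to `ℓ∞` containing `b` with
tangent splash `S`. -/
theorem statement9 (q : ℕ) (F K : Type) [Field F] [Field K] [Fintype F] [Fintype K]
    [Algebra F K] (hF : Fintype.card F = q) (hK : Fintype.card K = q ^ 3)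
    (S : Set (PGPoint K)) (T : PGPoint K) (hS : IsTangentSplash F S T)
    (b L : Set (PGPoint K)) (hb : IsSubline F q b) (hL : IsLine L) (hbL : b ⊆ L)
    (hdisj : b ∩ linf K = ∅)
    (X : PGPoint K) (hX : L ∩ linf K = {X}) (hXS : X ∈ S) (hXT : X ≠ T) :
    ∃! π : Set (PGPoint K), IsSubplane F π ∧ (∃ T' : PGPoint K, π ∩ linf K = {T'}) ∧
      b ⊆ π ∧ splash π = S := by
  classical
  have hq : 0 < q := by rw [← hF]; exact Fintype.card_pos
  have hq1 : 1 < q := by rw [← hF]; exact Fintype.one_lt_card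
  have h3 : Module.finrank F K = 3 := by
    have := Module.card_eq_pow_finrank (K := F) (V := K)
    rw [hF, hK] at this
    exact (Nat.pow_right_injective hq1 this).symm
  obtain ⟨π0, hπ0, hT0, rfl⟩ := hS
  obtain ⟨t, m, n, hI, ht, hJ, ⟨ht0, rfl⟩, rfl⟩ := tang_normal hπ0 hT0
  obtain ⟨a, c, hac, rfl⟩ := subline_normal hq hb
  have hw := hI.I2w (r := m 2) hJ.ne.2
  rw [splash_eq hI ht hJ] at hXS ⊢
  set w := n 2 • m - m 2 • n with hwd
  -- the subline gives independent heights
  have hJb : J2 F (a 2) (c 2) := by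
    intro x y e
    by_cases h0 : algebraMap F K x • a + algebraMap F K y • c = 0
    · simpa using hac _ _ h0
    · have : Projectivization.mk K _ h0 ∈ Pts (comb2 F a c) ∩ linf K :=
        ⟨⟨_, ⟨x, y, rfl⟩, h0, rfl⟩, (mem_linf _).2 e⟩
      rw [hdisj] at this
      exact this.elim
  have hc0 := hJb.ne.2
  set v := c 2 • a - a 2 • c with hvd
  have hv0 : v ≠ 0 := by
    intro e
    exact hc0 (hac (c 2) (-a 2) (by rw [← e, hvd]; module)).1
  have hXv : X = Projectivization.mk K v hv0 := by
    have : Projectivization.mk K v hv0 ∈ L ∩ linf K := by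
      obtain ⟨W, hW, rfl⟩ := hL
      refine ⟨(mem_line hv0).2 ?_, (mem_linf _).2 (by simp [hvd]; ring)⟩
      have h1 : a ∈ W := (mem_line hac.ne.1).1 (hbL ⟨a, ⟨1, 0, by simp⟩, hac.ne.1, rfl⟩)
      have h2 : c ∈ W := (mem_line hac.ne.2.1).1 (hbL ⟨c, ⟨0, 1, by simp⟩, hac.ne.2.1, rfl⟩)
      exact W.sub_mem (W.smul_mem _ h1) (W.smul_mem _ h2)
    rw [hX] at this
    exact this.symm
  rw [hXv, mem_Sp hw] at hXS
  obtain ⟨s, hs, (hXS | ⟨u0, hu0, hXS⟩)⟩ := hXS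
  · exact (hXT (by rw [hXv, mk_eq]; exact ⟨s, hs, hXS⟩)).elim
  obtain ⟨k, hk, hkU⟩ := scal h3 hJb hJ
  have hI1 : I3 ((s * k) • t) a c := by
    apply I3.rot
    apply I3_of hac
    intro α β e
    have e2 : α * a 2 + β * c 2 = 0 := by
      have := congrFun e 2
      simp [ht] at this
      exact this.symm
    have e3 : (s * k) • t = (α / c 2) • v := by
      have hβ : β = - (α / c 2) * a 2 := by field_simp; linear_combination e2
      have hα : α = α / c 2 * c 2 := by field_simp
      rw [e, hβ, hvd]
      nth_rewrite 1 [hα]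
      module
    rw [hXS] at e3
    have e4 := hw.coord (x := s * k) (y := 0) (x' := α / c 2 * s * u0) (y' := α / c 2 * s)
      (by rw [zero_smul, add_zero, e3]; module)
    have e5 := e4.1
    rw [← e4.2] at e5
    simp [hs, hk] at e5
  have ht1 : ((s * k) • t) 2 = 0 := by simp [ht]
  have hw1 : I2 ((s * k) • t) v := hI1.I2w hc0
  have hsub : ∀ {x y : K}, x ∈ U2 F (m 2) (n 2) → y ∈ U2 F (m 2) (n 2) →
      x + y ∈ U2 F (m 2) (n 2) ∧ x - y ∈ U2 F (m 2) (n 2) := by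
    rintro _ _ ⟨x, y, rfl⟩ ⟨x', y', rfl⟩
    exact ⟨⟨x + x', y + y', by simp; ring⟩, ⟨x - x', y - y', by simp; ring⟩⟩
  have hsp : splash (Pts (comb F ((s * k) • t) a c)) = Sp t w (U2 F (m 2) (n 2)) := by
    rw [splash_eq hI1 ht1 hJb, ← hvd]
    ext P
    obtain ⟨p, hp, rfl⟩ := ex_mk P
    rw [mem_Sp hw1, mem_Sp hw]
    constructor
    · rintro ⟨r, hr, (e | ⟨y, hy, e⟩)⟩
      · exact ⟨r * (s * k), mul_ne_zero hr (mul_ne_zero hs hk), Or.inl (by rw [e]; module)⟩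
      · refine ⟨r * s, mul_ne_zero hr hs, Or.inr ⟨_, (hsub hu0 ((hkU y).1 hy)).1, ?_⟩⟩
        rw [e, hXS]; module
    · rintro ⟨r, hr, (e | ⟨u, hu, e⟩)⟩
      · refine ⟨r * (s * k)⁻¹, mul_ne_zero hr (inv_ne_zero (mul_ne_zero hs hk)), Or.inl ?_⟩
        rw [e, smul_smul, mul_assoc, inv_mul_cancel₀ (mul_ne_zero hs hk), mul_one]
      · have hku : k * (k⁻¹ * (u - u0)) = u - u0 := by field_simp
        refine ⟨r * s⁻¹, mul_ne_zero hr (inv_ne_zero hs), Or.inr ⟨k⁻¹ * (u - u0), ?_, ?_⟩⟩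
        · rw [hkU, hku]; exact (hsub hu hu0).2
        · have : u = u0 + k * (k⁻¹ * (u - u0)) := by rw [hku]; ring
          generalize k⁻¹ * (u - u0) = z at *
          have hss : r = r * s⁻¹ * s := by field_simp
          rw [e, hXS, this]
          nth_rewrite 1 [hss]
          module
  refine ⟨Pts (comb F ((s * k) • t) a c), ⟨isSubplane_iff.2 ⟨_, _, _, hI1, rfl⟩,
    ⟨_, tang_of hI1 hw1.ne.1 ht1 hJb⟩, ?_, hsp⟩, ?_⟩
  · rintro _ ⟨_, ⟨x, y, rfl⟩, h0, rfl⟩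
    exact ⟨_, ⟨0, x, y, by simp⟩, h0, rfl⟩
  · rintro π' ⟨hπ', ⟨T', hT'⟩, hbπ, hsp'⟩
    obtain ⟨t', hI', ht', rfl⟩ := uniq_normal hπ' hT' hac hbπ hdisj
    have hw' : I2 t' v := hI'.I2w hc0
    have heq : Sp ((s * k) • t) v (U2 F (a 2) (c 2)) = Sp t' v (U2 F (a 2) (c 2)) := by
      rw [← splash_eq hI1 ht1 hJb, ← splash_eq hI' ht' hJb, hsp, hsp']
    generalize (s * k) • t = t1 at *
    obtain ⟨κ, hκ, rfl⟩ := centre h3 hJb hw1 hw' heq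
    obtain ⟨z, rfl⟩ := stab h3 hJb (μ := κ) (by
      intro u hu
      have h0 : v + u • κ • t1 ≠ 0 := by
        intro e
        have := hw' u 1 (by rw [← e]; module)
        simp at this
      have hm : Projectivization.mk K _ h0 ∈ Sp t1 v (U2 F (a 2) (c 2)) := by
        rw [heq, mem_Sp hw']
        exact ⟨1, one_ne_zero, Or.inr ⟨u, hu, by simp⟩⟩
      rw [mem_Sp hw1] at hm
      obtain ⟨r, hr, (e | ⟨u', hu', e⟩)⟩ := hm
      · have := (hw1.coord (x := u * κ) (y := 1) (x' := r) (y' := 0) (by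
          rw [zero_smul, add_zero, ← e]; module)).2
        simp at this
      · have := hw1.coord (x := u * κ) (y := 1) (x' := r * u') (y' := r) (by
          trans v + u • κ • t1
          · module
          · rw [e]; module)
        obtain ⟨e1, rfl⟩ := this
        rw [mul_comm, e1, one_mul]
        exact hu')
    rw [comb_eq hI1 hI' ⟨z, 0, 0, by simp⟩ ⟨0, 1, 0, by simp⟩ ⟨0, 0, 1, by simp⟩]

end TangentSplashPaper
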